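/- arXiv:2406.18325 — 2 statements merged into one kernel-verified Lean document; each statement's English description precedes it below -/
import Mathlib

section
/- Let a, b ∈ 𝔽_q^* with a ≠ wb for every w ∈ 𝔽_p^*, write α = Tr(a²), β = Tr(b²), γ = Tr(ab), and let Ω = #{d ∈ 𝔽_q : Tr(d²) = 0, Tr(ad) = 0 and Tr(bd) = 0}. If m is even, then (as complex numbers): Ω = p^{m−3} + p^{−1}(p−1)G if α = β = γ = 0; Ω = p^{m−3} if α ≠ 0, β ≠ 0 and αβ = γ²; Ω = p^{m−3} + η̄(γ² − αβ)·p^{−2}(p−1)G if α ≠ 0, β ≠ 0 and αβ ≠ γ²; Ω = p^{m−3} + p^{−2}(p−1)G if γ ≠ 0 and at most one of α, β is nonzero; and Ω = p^{m−3} if γ = 0 and exactly one of α, β is nonzero. -/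
open Finset
open scoped Classical

noncomputable section

/-- `ζ_p = exp(2πi/p)`. -/
def zeta (p : ℕ) : ℂ := Complex.exp (2 * Real.pi * Complex.I / p)

/-- The canonical additive character of `ℤ/p`: `χ̄₁(c) = ζ_p^c`. -/
def chiBar (p : ℕ) (c : ZMod p) : ℂ := zeta p ^ c.val

/-- The quadratic character of `(ℤ/p)^*`, extended by `η̄(0) = 0`. -/
def etaBar (p : ℕ) (c : ZMod p) : ℂ :=
  if c = 0 then 0 else if IsSquare c then 1 else -1

/-- The quadratic character of `F^*`, extended by `η(0) = 0`. -/
def etaQ (F : Type) [Field F] (x : F) : ℂ :=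
  if x = 0 then 0 else if IsSquare x then 1 else -1

/-- The absolute trace map from `F` to `ℤ/p`. -/
def Trq (p : ℕ) (F : Type) [Field F] [Algebra (ZMod p) F] (x : F) : ZMod p :=
  Algebra.trace (ZMod p) F x

/-- The canonical additive character of `F`: `χ₁(x) = ζ_p^{Tr x}`. -/
def chiQ (p : ℕ) (F : Type) [Field F] [Algebra (ZMod p) F] (x : F) : ℂ :=
  chiBar p (Trq p F x)

/-- The quadratic Gauss sum `G` over `F`. -/
def GaussQ (p : ℕ) (F : Type) [Field F] [Fintype F] [Algebra (ZMod p) F] : ℂ :=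
  ∑ x ∈ univ.filter (fun x : F => x ≠ 0), etaQ F x * chiQ p F x

/-- The quadratic Gauss sum `Ḡ` over `ℤ/p`. -/
def GaussP (p : ℕ) [NeZero p] : ℂ :=
  ∑ y ∈ univ.filter (fun y : ZMod p => y ≠ 0), etaBar p y * chiBar p y

lemma card_sqrts_etaQ (F : Type) [Field F] [Fintype F] (hF : ringChar F ≠ 2) (a : F) :
    ((univ.filter (fun x : F => x ^ 2 = a)).card : ℂ) = etaQ F a + 1 := by
  have h := quadraticChar_card_sqrts hF a
  have h1 : ((univ.filter (fun x : F => x ^ 2 = a)).card : ℤ) = quadraticChar F a + 1 := by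
    rw [← h]
    congr 2
    ext x
    simp
  have h2 : ((quadraticChar F a : ℤ) : ℂ) = etaQ F a := by
    unfold etaQ
    rw [quadraticChar_apply, quadraticCharFun]
    split_ifs <;> simp
  have h3 : (((univ.filter (fun x : F => x ^ 2 = a)).card : ℤ) : ℂ) = etaQ F a + 1 := by
    rw [h1]; push_cast; rw [h2]
  exact_mod_cast h3

lemma etaBar_eq (p : ℕ) [Fact p.Prime] (c : ZMod p) : etaBar p c = etaQ (ZMod p) c := by
  unfold etaBar etaQ
  split_ifs <;> rfl

lemma chiBar_eq (p : ℕ) [Fact p.Prime] (c : ZMod p) :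
    chiBar p c = ZMod.stdAddChar c := by
  rw [ZMod.stdAddChar_apply, ZMod.toCircle_apply, chiBar, zeta, ← Complex.exp_nat_mul]
  congr 1
  ring

/-- The canonical additive character as an `AddChar`. -/
def chiA (p : ℕ) [Fact p.Prime] (F : Type) [Field F] [Algebra (ZMod p) F] : AddChar F ℂ :=
  (ZMod.stdAddChar (N := p)).compAddMonoidHom (Algebra.trace (ZMod p) F).toAddMonoidHom

lemma chiA_apply (p : ℕ) [Fact p.Prime] (F : Type) [Field F] [Algebra (ZMod p) F] (x : F) :
    chiA p F x = ZMod.stdAddChar (Trq p F x) := rfl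

lemma chiA_ne_one (p : ℕ) [Fact p.Prime] (F : Type) [Field F] [Fintype F] [Algebra (ZMod p) F] :
    chiA p F ≠ 1 := by
  obtain ⟨a, ha⟩ := Algebra.trace_surjective (ZMod p) F 1
  refine AddChar.ne_one_iff.2 ⟨a, ?_⟩
  rw [chiA_apply, Trq, ha]
  intro h
  have := ZMod.injective_stdAddChar (N := p) (h.trans (AddChar.map_zero_eq_one _).symm)
  exact one_ne_zero this

lemma sum_chiA_mul (p : ℕ) [Fact p.Prime] (F : Type) [Field F] [Fintype F] [Algebra (ZMod p) F]
    (u : F) : ∑ d : F, chiA p F (u * d) = if u = 0 then (Fintype.card F : ℂ) else 0 := by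
  have := AddChar.sum_mulShift u (AddChar.IsPrimitive.of_ne_one (chiA_ne_one p F))
  simp_rw [mul_comm u]
  rw [this]
  split_ifs <;> simp

lemma sum_psi_mul (p : ℕ) [Fact p.Prime] (u : ZMod p) :
    ∑ d : ZMod p, (ZMod.stdAddChar (d * u) : ℂ) = if u = 0 then (p : ℂ) else 0 := by
  have := AddChar.sum_mulShift u (ZMod.isPrimitive_stdAddChar p)
  rw [this]
  split_ifs <;> simp [ZMod.card]

lemma gauss_eq (p : ℕ) [Fact p.Prime] (F : Type) [Field F] [Fintype F] [Algebra (ZMod p) F]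
    (hF : ringChar F ≠ 2) : ∑ d : F, chiA p F (d ^ 2) = GaussQ p F := by
  have h1 : ∑ d : F, chiA p F (d ^ 2) = ∑ y : F, (etaQ F y + 1) * chiA p F y := by
    rw [← Finset.sum_fiberwise (s := univ) (g := fun d : F => d ^ 2)]
    refine Finset.sum_congr rfl fun y _ => ?_
    rw [← card_sqrts_etaQ F hF y, ← nsmul_eq_mul, ← Finset.sum_const]
    refine Finset.sum_congr rfl fun d hd => ?_
    rw [(Finset.mem_filter.1 hd).2]
  rw [h1]
  simp_rw [add_mul, one_mul]
  rw [Finset.sum_add_distrib, AddChar.sum_eq_zero_of_ne_one (chiA_ne_one p F), add_zero, GaussQ,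
    Finset.sum_filter]
  refine Finset.sum_congr rfl fun y _ => ?_
  split_ifs with h
  · rw [chiQ, chiBar_eq, chiA_apply]
  · have : y = 0 := by simpa using h
    simp [this, etaQ]

lemma isSquare_base (p m : ℕ) [Fact p.Prime] (hp : Odd p) (F : Type) [Field F] [Fintype F]
    [Algebra (ZMod p) F] (hF : ringChar F ≠ 2) (hq : Fintype.card F = p ^ m) (hm : Even m)
    (x : ZMod p) (hx : x ≠ 0) : IsSquare (algebraMap (ZMod p) F x) := by
  rw [FiniteField.isSquare_iff hF (by simpa using hx), hq, ← map_pow]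
  obtain ⟨k, rfl⟩ := hm
  obtain ⟨c, hc⟩ : p ^ 2 - 1 ∣ p ^ (k + k) - 1 := by
    have := Nat.sub_dvd_pow_sub_pow (p ^ 2) 1 k
    rwa [one_pow, ← pow_mul, two_mul] at this
  obtain ⟨r, rfl⟩ := hp
  have h2 : (2 * r + 1) ^ 2 - 1 = 2 * ((2 * r) * (r + 1)) := by
    have : (2 * r + 1) ^ 2 = 2 * ((2 * r) * (r + 1)) + 1 := by ring
    omega
  have hpos : 0 < (2 * r + 1) ^ (k + k) := by positivity
  have h3 : (2 * r + 1) ^ (k + k) / 2 = (2 * r) * ((r + 1) * c) := by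
    rw [h2] at hc
    have : (2 * r + 1) ^ (k + k) = 2 * ((2 * r) * ((r + 1) * c)) + 1 := by
      have : 2 * ((2 * r) * (r + 1)) * c = 2 * ((2 * r) * ((r + 1) * c)) := by ring
      omega
    omega
  rw [h3, pow_mul]
  have := ZMod.pow_card_sub_one_eq_one hx
  rw [show 2 * r + 1 - 1 = 2 * r by omega] at this
  rw [this, one_pow, map_one]

lemma Trq_smul (p : ℕ) [Fact p.Prime] (F : Type) [Field F] [Algebra (ZMod p) F] (c : ZMod p)
    (x : F) : Trq p F (algebraMap (ZMod p) F c * x) = c * Trq p F x := by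
  rw [Trq, Trq, ← Algebra.smul_def, map_smul, smul_eq_mul]

lemma quad_sum (p m : ℕ) [Fact p.Prime] (hp : Odd p) (F : Type) [Field F] [Fintype F]
    [Algebra (ZMod p) F] (hF : ringChar F ≠ 2) (hq : Fintype.card F = p ^ m) (hm : Even m)
    (x : ZMod p) (hx : x ≠ 0) (u : F) :
    ∑ d : F, chiA p F (algebraMap (ZMod p) F x * d ^ 2 + u * d) =
      GaussQ p F * ZMod.stdAddChar (-(4 * x)⁻¹ * Trq p F (u ^ 2)) := by
  obtain ⟨s, hs⟩ := isSquare_base p m hp F hF hq hm x hx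
  have hX : algebraMap (ZMod p) F x ≠ 0 := by simpa using hx
  have hs0 : s ≠ 0 := by rintro rfl; simp at hs; exact hx hs
  have h2 : (2 : F) ≠ 0 := Ring.two_ne_zero hF
  have h4 : (4 : F) ≠ 0 := by
    have : (4 : F) = 2 * 2 := by norm_num
    rw [this]; exact mul_ne_zero h2 h2
  have key : ∀ d : F, chiA p F (algebraMap (ZMod p) F x * d ^ 2 + u * d) =
      chiA p F ((s * d + u / (2 * s)) ^ 2) *
        ZMod.stdAddChar (-(4 * x)⁻¹ * Trq p F (u ^ 2)) := by
    intro d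
    rw [← Trq_smul, ← chiA_apply, ← AddChar.map_add_eq_mul]
    congr 1
    rw [map_neg, map_inv₀, map_mul, hs, map_ofNat]
    field_simp
    ring
  simp_rw [key]
  rw [← Finset.sum_mul, ← gauss_eq p F hF]
  congr 1
  refine Fintype.sum_bijective (fun d => s * d + u / (2 * s)) ?_ _ _ (fun d => rfl)
  exact ((Equiv.mulLeft₀ s hs0).trans (Equiv.addRight (u / (2 * s)))).bijective

lemma omega_inner_sum (p m : ℕ) [Fact p.Prime] (hp : Odd p) (F : Type) [Field F] [Fintype F]
    [Algebra (ZMod p) F] (hF : ringChar F ≠ 2) (hq : Fintype.card F = p ^ m) (hm : Even m)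
    (h4 : (4 : ZMod p) ≠ 0) (u : F) :
    ∑ x : ZMod p, ∑ d : F, chiA p F (algebraMap (ZMod p) F x * d ^ 2 + u * d) =
      (if u = 0 then (p : ℂ) ^ m else 0) +
        GaussQ p F * ((if Trq p F (u ^ 2) = 0 then (p : ℂ) else 0) - 1) := by
  have hg : ∑ x : ZMod p, (ZMod.stdAddChar (-(4 * x)⁻¹ * Trq p F (u ^ 2)) : ℂ) =
      if Trq p F (u ^ 2) = 0 then (p : ℂ) else 0 := by
    rw [← sum_psi_mul]
    refine Fintype.sum_bijective (fun x : ZMod p => -(4 * x)⁻¹) ?_ _ _ (fun d => rfl)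
    exact ((Equiv.mulLeft₀ (4 : ZMod p) h4).trans ((Equiv.inv (ZMod p)).trans
      (Equiv.neg (ZMod p)))).bijective
  rw [← hg, ← Finset.add_sum_erase _ _ (Finset.mem_univ (0 : ZMod p)),
    ← Finset.add_sum_erase univ (fun x : ZMod p =>
      (ZMod.stdAddChar (-(4 * x)⁻¹ * Trq p F (u ^ 2)) : ℂ)) (Finset.mem_univ (0 : ZMod p))]
  have h0 : ∑ d : F, chiA p F (algebraMap (ZMod p) F 0 * d ^ 2 + u * d) =
      if u = 0 then (p : ℂ) ^ m else 0 := by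
    simp only [map_zero, zero_mul, zero_add]
    rw [sum_chiA_mul, hq]
    push_cast
    rfl
  rw [h0]
  congr 1
  simp only [mul_zero, inv_zero, neg_zero, zero_mul, AddChar.map_zero_eq_one, add_sub_cancel_left]
  rw [Finset.mul_sum]
  refine Finset.sum_congr rfl fun x hx => ?_
  exact quad_sum p m hp F hF hq hm x (Finset.ne_of_mem_erase hx) u

/-- Number of zeros of the associated binary quadratic form. -/
def N0 (p : ℕ) [Fact p.Prime] (α β γ : ZMod p) : ℂ :=
  ∑ y : ZMod p, ∑ z : ZMod p, if α * y ^ 2 + 2 * γ * (y * z) + β * z ^ 2 = 0 then (1 : ℂ) else 0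

lemma omega_formula (p m : ℕ) [Fact p.Prime] (hp : Odd p) (F : Type) [Field F] [Fintype F]
    [Algebra (ZMod p) F] (hF : ringChar F ≠ 2) (hq : Fintype.card F = p ^ m) (hm : Even m)
    (h4 : (4 : ZMod p) ≠ 0) (a b : F) (ha : a ≠ 0) (hb : b ≠ 0)
    (hab : ∀ w : ZMod p, w ≠ 0 → a ≠ algebraMap (ZMod p) F w * b) :
    (p : ℂ) ^ 3 * ((univ.filter (fun d : F =>
      Trq p F (d ^ 2) = 0 ∧ Trq p F (a * d) = 0 ∧ Trq p F (b * d) = 0)).card : ℂ) =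
    (p : ℂ) ^ m + GaussQ p F * (p * N0 p (Trq p F (a ^ 2)) (Trq p F (b ^ 2)) (Trq p F (a * b))
      - (p : ℂ) ^ 2) := by
  set A := algebraMap (ZMod p) F with hA
  have h1 : (p : ℂ) ^ 3 * ((univ.filter (fun d : F =>
      Trq p F (d ^ 2) = 0 ∧ Trq p F (a * d) = 0 ∧ Trq p F (b * d) = 0)).card : ℂ) =
      ∑ d : F, ∑ y : ZMod p, ∑ z : ZMod p, ∑ x : ZMod p,
        chiA p F (A x * d ^ 2 + (A y * a + A z * b) * d) := by
    rw [Finset.card_filter, Nat.cast_sum, Finset.mul_sum]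
    refine Finset.sum_congr rfl fun d _ => ?_
    have : ∀ x y z : ZMod p, chiA p F (A x * d ^ 2 + (A y * a + A z * b) * d) =
        ZMod.stdAddChar (y * Trq p F (a * d)) * (ZMod.stdAddChar (z * Trq p F (b * d)) *
          ZMod.stdAddChar (x * Trq p F (d ^ 2))) := by
      intro x y z
      simp only [← Trq_smul, ← chiA_apply, ← AddChar.map_add_eq_mul]
      congr 1
      ring
    simp_rw [this, ← Finset.mul_sum, ← Finset.sum_mul, sum_psi_mul]
    by_cases e1 : Trq p F (d ^ 2) = 0 <;> by_cases e2 : Trq p F (a * d) = 0 <;>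
      by_cases e3 : Trq p F (b * d) = 0 <;> simp [e1, e2, e3] <;> ring
  have h2 : ∑ d : F, ∑ y : ZMod p, ∑ z : ZMod p, ∑ x : ZMod p,
        chiA p F (A x * d ^ 2 + (A y * a + A z * b) * d) =
      ∑ y : ZMod p, ∑ z : ZMod p, ∑ x : ZMod p, ∑ d : F,
        chiA p F (A x * d ^ 2 + (A y * a + A z * b) * d) := by
    rw [Finset.sum_comm]
    refine Finset.sum_congr rfl fun y _ => ?_
    rw [Finset.sum_comm]
    refine Finset.sum_congr rfl fun z _ => ?_
    rw [Finset.sum_comm]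
  have hlin : ∀ y z : ZMod p, A y * a + A z * b = 0 ↔ y = 0 ∧ z = 0 := by
    intro y z
    constructor
    · intro h
      by_cases hy : y = 0
      · subst hy
        simp [hb] at h
        exact ⟨rfl, h⟩
      · exfalso
        have hAy : A y ≠ 0 := by simpa [hA] using hy
        have hz : z ≠ 0 := by
          rintro rfl
          simp [ha] at h
          exact hy h
        refine hab (-z / y) (div_ne_zero (neg_ne_zero.2 hz) hy) ?_
        rw [map_div₀, map_neg]
        field_simp
        linear_combination h
    · rintro ⟨rfl, rfl⟩
      simp
  have hTr : ∀ y z : ZMod p, Trq p F ((A y * a + A z * b) ^ 2) =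
      Trq p F (a ^ 2) * y ^ 2 + 2 * Trq p F (a * b) * (y * z) + Trq p F (b ^ 2) * z ^ 2 := by
    intro y z
    have : (A y * a + A z * b) ^ 2 = A (y ^ 2) * a ^ 2 + A (2 * (y * z)) * (a * b) +
        A (z ^ 2) * b ^ 2 := by
      simp only [map_pow, map_mul, map_ofNat]; ring
    have hadd : ∀ u v : F, Trq p F (u + v) = Trq p F u + Trq p F v := fun u v => map_add _ u v
    rw [this, hadd, hadd, Trq_smul, Trq_smul, Trq_smul]
    ring
  rw [h1, h2]
  simp_rw [hA, omega_inner_sum p m hp F hF hq hm h4, ← hA, hlin, hTr]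
  simp_rw [Finset.sum_add_distrib, ← Finset.mul_sum, Finset.sum_sub_distrib]
  congr 1
  · simp [ite_and]
  · congr 1
    congr 1
    · rw [N0, Finset.mul_sum]
      refine Finset.sum_congr rfl fun y _ => ?_
      rw [Finset.mul_sum]
      refine Finset.sum_congr rfl fun z _ => ?_
      split_ifs <;> simp
    · simp [ZMod.card]; ring

lemma N0_swap (p : ℕ) [Fact p.Prime] (α β γ : ZMod p) : N0 p α β γ = N0 p β α γ := by
  rw [N0, N0, Finset.sum_comm]
  refine Finset.sum_congr rfl fun y _ => Finset.sum_congr rfl fun z _ => ?_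
  rw [show α * z ^ 2 + 2 * γ * (z * y) + β * y ^ 2 = β * y ^ 2 + 2 * γ * (y * z) + α * z ^ 2 by ring]

lemma etaQ_mul_sq (F : Type) [Field F] (D z : F) (hz : z ≠ 0) : etaQ F (D * z ^ 2) = etaQ F D := by
  have h : IsSquare (D * z ^ 2) ↔ IsSquare D := by
    constructor
    · rintro ⟨r, hr⟩
      refine ⟨r / z, ?_⟩
      field_simp
      linear_combination hr
    · rintro ⟨r, rfl⟩
      exact ⟨r * z, by ring⟩
  simp [etaQ, h, hz]

lemma N0_of_ne (p : ℕ) [Fact p.Prime] (h2 : ringChar (ZMod p) ≠ 2) (α β γ : ZMod p) (hα : α ≠ 0) :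
    N0 p α β γ = p + (p - 1) * etaBar p (γ ^ 2 - α * β) := by
  rw [N0, Finset.sum_comm]
  have key : ∀ z : ZMod p, (∑ y : ZMod p,
      if α * y ^ 2 + 2 * γ * (y * z) + β * z ^ 2 = 0 then (1 : ℂ) else 0) =
      etaQ (ZMod p) ((γ ^ 2 - α * β) * z ^ 2) + 1 := by
    intro z
    rw [← card_sqrts_etaQ _ h2, Finset.card_filter, Nat.cast_sum]
    refine Fintype.sum_bijective (fun y => α * y + γ * z) ?_ _ _ (fun y => ?_)
    · exact ((Equiv.mulLeft₀ α hα).trans (Equiv.addRight (γ * z))).bijective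
    · have : α * y ^ 2 + 2 * γ * (y * z) + β * z ^ 2 = 0 ↔
          (α * y + γ * z) ^ 2 = (γ ^ 2 - α * β) * z ^ 2 := by
        constructor
        · intro h
          linear_combination α * h
        · intro h
          refine (mul_eq_zero.1 (?_ : α * _ = 0)).resolve_left hα
          linear_combination h
      simp [this]
  simp_rw [key]
  rw [Finset.sum_add_distrib, ← Finset.add_sum_erase _ _ (Finset.mem_univ (0 : ZMod p)),
    Finset.sum_congr rfl (fun z hz => etaQ_mul_sq (ZMod p) _ z (Finset.ne_of_mem_erase hz))]
  have hp1 : 1 ≤ p := (Fact.out : p.Prime).one_le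
  simp [ZMod.card, etaBar_eq, Nat.cast_sub hp1]
  simp [etaQ]
  ring

lemma N0_zero (p : ℕ) [Fact p.Prime] : N0 p 0 0 0 = (p : ℂ) ^ 2 := by
  simp [N0, ZMod.card]; ring

lemma N0_hyp (p : ℕ) [Fact p.Prime] (h2 : (2 : ZMod p) ≠ 0) (γ : ZMod p) (hγ : γ ≠ 0) :
    N0 p 0 0 γ = 2 * p - 1 := by
  have hp1 : 1 ≤ p := (Fact.out : p.Prime).one_le
  rw [N0, ← Finset.add_sum_erase _ _ (Finset.mem_univ (0 : ZMod p))]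
  have : ∀ y ∈ univ.erase (0 : ZMod p), (∑ z : ZMod p,
      if 0 * y ^ 2 + 2 * γ * (y * z) + 0 * z ^ 2 = 0 then (1 : ℂ) else 0) = 1 := by
    intro y hy
    simp [h2, hγ, Finset.ne_of_mem_erase hy]
  rw [Finset.sum_congr rfl this]
  simp [ZMod.card, Nat.cast_sub hp1]
  ring

lemma etaBar_sq (p : ℕ) [Fact p.Prime] (γ : ZMod p) (hγ : γ ≠ 0) : etaBar p (γ ^ 2) = 1 := by
  have : IsSquare (γ ^ 2) := ⟨γ, sq γ⟩
  simp [etaBar, hγ, this]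

theorem Omega_card_m_even (p m : ℕ) [Fact (Nat.Prime p)] (hp : Odd p)
    (F : Type) [Field F] [Fintype F] [Algebra (ZMod p) F]
    (hm : 0 < m) (hq : Fintype.card F = p ^ m)
    (hmeven : Even m) (a b : F) (ha : a ≠ 0) (hb : b ≠ 0)
    (hab : ∀ w : ZMod p, w ≠ 0 → a ≠ algebraMap (ZMod p) F w * b)
    (α β γ : ZMod p) (hα : α = Trq p F (a ^ 2)) (hβ : β = Trq p F (b ^ 2))
    (hγ : γ = Trq p F (a * b)) :
    (α = 0 ∧ β = 0 ∧ γ = 0 →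
      (((univ.filter (fun d : F =>
      Trq p F (d ^ 2) = 0 ∧ Trq p F (a * d) = 0 ∧ Trq p F (b * d) = 0)).card : ℕ) : ℂ) = (p : ℂ) ^ ((m : ℤ) - 3 : ℤ) + (p : ℂ)⁻¹ * ((p : ℂ) - 1) * GaussQ p F) ∧
    (α ≠ 0 ∧ β ≠ 0 ∧ α * β = γ ^ 2 →
      (((univ.filter (fun d : F =>
      Trq p F (d ^ 2) = 0 ∧ Trq p F (a * d) = 0 ∧ Trq p F (b * d) = 0)).card : ℕ) : ℂ) = (p : ℂ) ^ ((m : ℤ) - 3 : ℤ)) ∧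
    (α ≠ 0 ∧ β ≠ 0 ∧ α * β ≠ γ ^ 2 →
      (((univ.filter (fun d : F =>
      Trq p F (d ^ 2) = 0 ∧ Trq p F (a * d) = 0 ∧ Trq p F (b * d) = 0)).card : ℕ) : ℂ) = (p : ℂ) ^ ((m : ℤ) - 3 : ℤ) + etaBar p (γ ^ 2 - α * β) * (p : ℂ) ^ (-2 : ℤ) * ((p : ℂ) - 1) * GaussQ p F) ∧
    (γ ≠ 0 ∧ (α = 0 ∨ β = 0) →
      (((univ.filter (fun d : F =>
      Trq p F (d ^ 2) = 0 ∧ Trq p F (a * d) = 0 ∧ Trq p F (b * d) = 0)).card : ℕ) : ℂ) = (p : ℂ) ^ ((m : ℤ) - 3 : ℤ) + (p : ℂ) ^ (-2 : ℤ) * ((p : ℂ) - 1) * GaussQ p F) ∧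
    (γ = 0 ∧ ((α ≠ 0 ∧ β = 0) ∨ (α = 0 ∧ β ≠ 0)) →
      (((univ.filter (fun d : F =>
      Trq p F (d ^ 2) = 0 ∧ Trq p F (a * d) = 0 ∧ Trq p F (b * d) = 0)).card : ℕ) : ℂ) = (p : ℂ) ^ ((m : ℤ) - 3 : ℤ)) := by
  have hp2 : p ≠ 2 := by rintro rfl; exact absurd hp (by decide)
  haveI : CharP F p := charP_of_injective_algebraMap (algebraMap (ZMod p) F).injective p
  have hF : ringChar F ≠ 2 := by rw [ringChar.eq F p]; exact hp2
  have hZ : ringChar (ZMod p) ≠ 2 := by rw [ringChar.eq (ZMod p) p]; exact hp2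
  have h2 : (2 : ZMod p) ≠ 0 := Ring.two_ne_zero hZ
  have h4 : (4 : ZMod p) ≠ 0 := by
    have : (4 : ZMod p) = 2 * 2 := by norm_num
    rw [this]; exact mul_ne_zero h2 h2
  have hp0 : (p : ℂ) ≠ 0 := by exact_mod_cast (Fact.out : p.Prime).ne_zero
  have main := omega_formula p m hp F hF hq hmeven h4 a b ha hb hab
  rw [← hα, ← hβ, ← hγ] at main
  generalize (((univ.filter (fun d : F =>
      Trq p F (d ^ 2) = 0 ∧ Trq p F (a * d) = 0 ∧ Trq p F (b * d) = 0)).card : ℕ) : ℂ) = Ω at main ⊢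
  have e3 : (p : ℂ) ^ ((m : ℤ) - 3 : ℤ) = (p : ℂ) ^ m / (p : ℂ) ^ 3 := by
    rw [zpow_sub₀ hp0]; norm_cast
  have e2 : (p : ℂ) ^ (-2 : ℤ) = 1 / (p : ℂ) ^ 2 := by
    rw [zpow_neg]; norm_cast; simp
  have hΩ : Ω = (p : ℂ) ^ m / (p : ℂ) ^ 3 + GaussQ p F * (N0 p α β γ - p) / (p : ℂ) ^ 2 := by
    field_simp
    linear_combination main
  rw [e3, e2, hΩ]
  have hη0 : etaBar p 0 = 0 := by simp [etaBar]
  refine ⟨?_, ?_, ?_, ?_, ?_⟩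
  · rintro ⟨h, hk2, hk3⟩
    rw [h, hk2, hk3, N0_zero]
    field_simp
  · rintro ⟨h, hk2, hk3⟩
    rw [N0_of_ne p hZ α β γ h, hk3, sub_self, hη0]
    ring
  · rintro ⟨h, hk2, hk3⟩
    rw [N0_of_ne p hZ α β γ h]
    ring
  · rintro ⟨h, hk2⟩
    have : N0 p α β γ = 2 * p - 1 := by
      by_cases ha0 : α = 0
      · by_cases hb0 : β = 0
        · rw [ha0, hb0, N0_hyp p h2 γ h]
        · rw [N0_swap, N0_of_ne p hZ β α γ hb0, ha0, mul_zero, sub_zero, etaBar_sq p γ h]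
          ring
      · have hb0 : β = 0 := hk2.resolve_left ha0
        rw [N0_of_ne p hZ α β γ ha0, hb0, mul_zero, sub_zero, etaBar_sq p γ h]
        ring
    rw [this]
    ring
  · rintro ⟨h, ⟨hk2, hk3⟩ | ⟨hk2, hk3⟩⟩
    · rw [N0_of_ne p hZ α β γ hk2, h, hk3]
      simp [hη0]
    · rw [N0_swap, N0_of_ne p hZ β α γ hk3, h, hk2]
      simp [hη0]
end
end

section
/- Let a, b ∈ 𝔽_q^* with a ≠ wb for every w ∈ 𝔽_p^*, write α = Tr(a²), β = Tr(b²), γ = Tr(ab), and let Ω = #{d ∈ 𝔽_q : Tr(d²) = 0, Tr(ad) = 0 and Tr(bd) = 0}. If m is odd, then (as complex numbers): Ω = p^{m−3} + η̄(−α)·p^{−2}(p−1)GḠ if α ≠ 0 and β = γ = 0; Ω = p^{m−3} if (α ≠ 0, β ≠ 0 and αβ ≠ γ²) or α = β = 0; Ω = p^{m−3} if γ ≠ 0 and exactly one of α, β is nonzero; and Ω = p^{m−3} + η̄(−β)·p^{−2}(p−1)GḠ if (α ≠ 0, β ≠ 0 and αβ = γ²) or (β ≠ 0 and α = γ = 0).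 -/
open Finset
open scoped Classical

noncomputable section

/-- The quadratic character as a complex multiplicative character. -/
def qc (K : Type) [Field K] [Fintype K] : MulChar K ℂ :=
  (quadraticChar K).ringHomComp (Int.castRingHom ℂ)

lemma qc_eq (K : Type) [Field K] [Fintype K] (x : K) :
    qc K x = if x = 0 then 0 else if IsSquare x then 1 else -1 := by
  simp only [qc, MulChar.ringHomComp_apply, quadraticChar_apply, quadraticCharFun]
  split_ifs <;> simp

lemma qc_etaQ (K : Type) [Field K] [Fintype K] (x : K) : etaQ K x = qc K x := by
  rw [qc_eq, etaQ]
  split_ifs <;> rfl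

lemma qc_etaBar (p : ℕ) [Fact p.Prime] (x : ZMod p) : etaBar p x = qc (ZMod p) x := by
  rw [qc_eq, etaBar]
  split_ifs <;> rfl

lemma qc_sq {K : Type} [Field K] [Fintype K] {x : K} (hx : x ≠ 0) : qc K (x ^ 2) = 1 := by
  rw [qc_eq, if_neg (pow_ne_zero 2 hx), if_pos (IsSquare.sq x)]

lemma qc_mul_self {K : Type} [Field K] [Fintype K] {x : K} (hx : x ≠ 0) :
    qc K x * qc K x = 1 := by
  rw [← map_mul, ← sq, qc_sq hx]

lemma qc_zero {K : Type} [Field K] [Fintype K] : qc K 0 = 0 := by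
  rw [qc_eq, if_pos rfl]

lemma qc_ne_one {K : Type} [Field K] [Fintype K] (hK : ringChar K ≠ 2) : qc K ≠ 1 := by
  obtain ⟨c, hc⟩ := FiniteField.exists_nonsquare hK
  intro h
  have h0 : c ≠ 0 := by rintro rfl; exact hc IsSquare.zero
  have := qc_eq K c
  rw [h, MulChar.one_apply h0.isUnit, if_neg h0, if_neg hc] at this
  norm_num at this

lemma qc_sum {K : Type} [Field K] [Fintype K] (hK : ringChar K ≠ 2) : ∑ x : K, qc K x = 0 :=
  MulChar.sum_eq_zero_of_ne_one (qc_ne_one hK)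

/-- Shifted Gauss sum. -/
lemma gauss_shift {K : Type} [Field K] [Fintype K] (hK : ringChar K ≠ 2) (ψ : AddChar K ℂ)
    (c : K) : ∑ x : K, qc K x * ψ (x * c) = qc K c * ∑ x : K, qc K x * ψ x := by
  by_cases hc : c = 0
  · subst hc
    simp [qc_sum hK, qc_zero]
  · rw [← Equiv.sum_comp (Equiv.mulRight₀ c hc) (fun x => qc K x * ψ x), Finset.mul_sum]
    refine Finset.sum_congr rfl fun x _ => ?_
    simp only [Equiv.mulRight₀_apply, map_mul]
    linear_combination (-(qc K x * ψ (x * c))) * qc_mul_self hc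

/-- The quadratic exponential sum. -/
lemma quad_sum_s14 {K : Type} [Field K] [Fintype K] (hK : ringChar K ≠ 2) (ψ : AddChar K ℂ)
    (hψ : ψ.IsPrimitive) {c : K} (hc : c ≠ 0) :
    ∑ d : K, ψ (d ^ 2 * c) = qc K c * ∑ x : K, qc K x * ψ x := by
  have h1 : ∑ d : K, ψ (d ^ 2 * c) = ∑ t : K, (qc K t + 1) * ψ (t * c) := by
    rw [← Finset.sum_fiberwise (s := univ) (g := fun d : K => d ^ 2)]
    refine Finset.sum_congr rfl fun t _ => ?_
    have h2 : ∀ d ∈ univ.filter (fun d : K => d ^ 2 = t), ψ (d ^ 2 * c) = ψ (t * c) := by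
      intro d hd
      rw [(Finset.mem_filter.1 hd).2]
    rw [Finset.sum_congr rfl h2, Finset.sum_const, nsmul_eq_mul]
    congr 1
    have h3 := quadraticChar_card_sqrts hK t
    have h4 : ({x : K | x ^ 2 = t}.toFinset) = univ.filter (fun d : K => d ^ 2 = t) := by
      ext; simp
    rw [h4] at h3
    have h5 := congrArg (Int.cast : ℤ → ℂ) h3
    push_cast at h5
    rw [h5]
    simp [qc]
  rw [h1, ← gauss_shift hK]
  have h6 := AddChar.sum_mulShift c hψ
  rw [if_neg hc] at h6
  simp only [add_mul, one_mul, Finset.sum_add_distrib]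
  rw [h6]; simp

/-- For odd extension degree the quadratic characters agree on the prime field. -/
lemma qc_base {p m : ℕ} [Fact p.Prime] {F : Type} [Field F] [Fintype F] [Algebra (ZMod p) F]
    (hq : Fintype.card F = p ^ m) (hm : Odd m) (x : ZMod p) :
    qc F (algebraMap (ZMod p) F x) = qc (ZMod p) x := by
  have hfr : Module.finrank (ZMod p) F = m := by
    have h := Module.card_eq_pow_finrank (K := ZMod p) (V := F)
    rw [hq, ZMod.card] at h
    exact (Nat.pow_right_injective (Fact.out : p.Prime).two_le h).symm
  by_cases hx : x = 0
  · subst hx; simp [qc_zero]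
  have hiff : IsSquare (algebraMap (ZMod p) F x) ↔ IsSquare x := by
    constructor
    · rintro ⟨s, hs⟩
      have h := congrArg (Algebra.norm (ZMod p)) hs
      rw [Algebra.norm_algebraMap, hfr, map_mul] at h
      obtain ⟨k, rfl⟩ := hm
      refine ⟨Algebra.norm (ZMod p) s / x ^ k, ?_⟩
      field_simp
      linear_combination h
    · rintro ⟨s, rfl⟩
      exact ⟨algebraMap _ _ s, by simp⟩
  rw [qc_eq, qc_eq]
  by_cases hs : IsSquare x
  · simp [hx, hiff.2 hs, hs]
  · have hs' := mt hiff.1 hs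
    simp [hx, hs, hs']

lemma exists_rep {K : Type} [Field K] [Fintype K] (hK : ringChar K ≠ 2) {D : K} (hD : D ≠ 0)
    (c : K) : ∃ u v : K, u ^ 2 + D * v ^ 2 = c := by
  obtain ⟨u, v, h⟩ := FiniteField.exists_root_sum_quadratic
    (f := (Polynomial.X ^ 2 - Polynomial.C c : Polynomial K))
    (g := Polynomial.C D * Polynomial.X ^ 2)
    (Polynomial.degree_X_pow_sub_C (by decide) _)
    (by rw [Polynomial.degree_C_mul_X_pow 2 hD]; rfl)
    (FiniteField.odd_card_of_char_ne_two hK)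
  refine ⟨u, v, ?_⟩
  simp at h
  linear_combination h

lemma sum_norm_form {K : Type} [Field K] [Fintype K] (hK : ringChar K ≠ 2) {D : K}
    (hD : D ≠ 0) : ∑ z : K × K, qc K (z.1 ^ 2 + D * z.2 ^ 2) = 0 := by
  obtain ⟨c, hc⟩ := FiniteField.exists_nonsquare hK
  have h0 : c ≠ 0 := by rintro rfl; exact hc IsSquare.zero
  obtain ⟨u, v, huv⟩ := exists_rep hK hD c
  have hbij : Function.Bijective
      (fun z : K × K => (u * z.1 - D * v * z.2, v * z.1 + u * z.2)) := by
    refine Finite.injective_iff_bijective.1 ?_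
    rintro ⟨s, z⟩ ⟨s', z'⟩ h
    simp only [Prod.mk.injEq] at h
    obtain ⟨h1, h2⟩ := h
    have e1 : c * s = c * s' := by
      rw [← huv]; linear_combination u * h1 + D * v * h2
    have e2 : c * z = c * z' := by
      rw [← huv]; linear_combination u * h2 - v * h1
    rw [mul_left_cancel₀ h0 e1, mul_left_cancel₀ h0 e2]
  have h1 := hbij.sum_comp (fun z : K × K => qc K (z.1 ^ 2 + D * z.2 ^ 2))
  have h2 : ∀ z : K × K, qc K ((u * z.1 - D * v * z.2) ^ 2 + D * (v * z.1 + u * z.2) ^ 2)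
      = - qc K (z.1 ^ 2 + D * z.2 ^ 2) := by
    intro z
    have e : (u * z.1 - D * v * z.2) ^ 2 + D * (v * z.1 + u * z.2) ^ 2
        = c * (z.1 ^ 2 + D * z.2 ^ 2) := by rw [← huv]; ring
    rw [e, map_mul, qc_eq K c, if_neg h0, if_neg hc]; ring
  simp only [h2, Finset.sum_neg_distrib] at h1
  linear_combination (-1 / 2 : ℂ) * h1

/-- Nondegenerate binary form. -/
lemma form_nondeg {K : Type} [Field K] [Fintype K] (hK : ringChar K ≠ 2) {α β γ : K}
    (hα : α ≠ 0) (hD : α * β ≠ γ ^ 2) :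
    ∑ y : K, ∑ z : K, qc K (-(α * y ^ 2 + 2 * γ * y * z + β * z ^ 2)) = 0 := by
  have hD' : α * β - γ ^ 2 ≠ 0 := sub_ne_zero.2 hD
  have h := sum_norm_form hK hD'
  rw [← Fintype.sum_prod_type' (fun y z => qc K (-(α * y ^ 2 + 2 * γ * y * z + β * z ^ 2)))]
  have hbij : Function.Bijective (fun z : K × K => (α * z.1 + γ * z.2, z.2)) := by
    refine Finite.injective_iff_bijective.1 ?_
    rintro ⟨s, z⟩ ⟨s', z'⟩ h
    simp only [Prod.mk.injEq] at h
    obtain ⟨h1, rfl⟩ := h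
    rw [mul_left_cancel₀ hα (add_right_cancel h1)]
  rw [← hbij.sum_comp] at h
  have hn : -α ≠ 0 := neg_ne_zero.2 hα
  have e : ∀ z : K × K, qc K (-(α * z.1 ^ 2 + 2 * γ * z.1 * z.2 + β * z.2 ^ 2))
      = qc K (-α) * qc K ((α * z.1 + γ * z.2) ^ 2 + (α * β - γ ^ 2) * z.2 ^ 2) := by
    intro z
    have e1 : (α * z.1 + γ * z.2) ^ 2 + (α * β - γ ^ 2) * z.2 ^ 2
      = (-α) * (-(α * z.1 ^ 2 + 2 * γ * z.1 * z.2 + β * z.2 ^ 2)) := by ring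
    rw [e1, map_mul, ← mul_assoc, qc_mul_self hn, one_mul]
  simp only [e, ← Finset.mul_sum]
  simp only at h
  rw [h, mul_zero]

/-- Hyperbolic binary form. -/
lemma form_hyp {K : Type} [Field K] [Fintype K] (hK : ringChar K ≠ 2) (γ : K) :
    ∑ y : K, ∑ z : K, qc K (-(0 * y ^ 2 + 2 * γ * y * z + 0 * z ^ 2)) = 0 := by
  have e : ∀ y z : K, qc K (-(0 * y ^ 2 + 2 * γ * y * z + 0 * z ^ 2))
      = qc K (-(2 * γ * y)) * qc K z := by
    intro y z; rw [← map_mul]; congr 1; ring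
  simp only [e, ← Finset.mul_sum, qc_sum hK, mul_zero, Finset.sum_const_zero]

/-- Degenerate binary form. -/
lemma form_deg {K : Type} [Field K] [Fintype K] {α β γ : K}
    (hβ : β ≠ 0) (hD : α * β = γ ^ 2) :
    ∑ y : K, ∑ z : K, qc K (-(α * y ^ 2 + 2 * γ * y * z + β * z ^ 2))
      = Fintype.card K * (Fintype.card K - 1) * qc K (-β) := by
  have hn : -β ≠ 0 := neg_ne_zero.2 hβ
  have e : ∀ y z : K, qc K (-(α * y ^ 2 + 2 * γ * y * z + β * z ^ 2))
      = qc K (-β) * qc K ((β * z + γ * y) ^ 2) := by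
    intro y z
    have e1 : (β * z + γ * y) ^ 2
      = (-β) * (-(α * y ^ 2 + 2 * γ * y * z + β * z ^ 2)) := by linear_combination (-y ^ 2) * hD
    rw [e1, map_mul, ← mul_assoc, qc_mul_self hn, one_mul]
  have s : ∑ w : K, qc K (w ^ 2) = Fintype.card K - 1 := by
    have e2 : ∀ w : K, qc K (w ^ 2) = 1 - if w = 0 then 1 else 0 := by
      intro w
      by_cases hw : w = 0
      · simp [hw, qc_zero]
      · rw [qc_sq hw, if_neg hw, sub_zero]
    simp [e2]
  have e3 : ∀ y : K, ∑ z : K, qc K ((β * z + γ * y) ^ 2) = Fintype.card K - 1 := by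
    intro y
    rw [← s]
    have hbij : Function.Bijective (fun z : K => β * z + γ * y) := by
      refine Finite.injective_iff_bijective.1 ?_
      intro z z' h
      exact mul_left_cancel₀ hβ (add_right_cancel h)
    exact hbij.sum_comp (fun w => qc K (w ^ 2))
  simp only [e, ← Finset.mul_sum, e3, Finset.sum_const, Finset.card_univ, nsmul_eq_mul]
  ring

lemma sum_swap_form {K : Type} [Field K] [Fintype K] (α β γ : K) :
    ∑ y : K, ∑ z : K, qc K (-(α * y ^ 2 + 2 * γ * y * z + β * z ^ 2))
      = ∑ y : K, ∑ z : K, qc K (-(β * y ^ 2 + 2 * γ * y * z + α * z ^ 2)) := by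
  rw [Finset.sum_comm]
  refine Finset.sum_congr rfl fun y _ => Finset.sum_congr rfl fun z _ => ?_
  congr 1; ring

/-- The canonical additive character of the prime field. -/
lemma exists_psi (p : ℕ) [Fact p.Prime] :
    ∃ ψ : AddChar (ZMod p) ℂ, ψ.IsPrimitive ∧ ∀ c, chiBar p c = ψ c := by
  have h : IsPrimitiveRoot (zeta p) p :=
    Complex.isPrimitiveRoot_exp p (Fact.out : p.Prime).ne_zero
  exact ⟨_, AddChar.zmodChar_primitive_of_primitive_root p h, fun c => rfl⟩

lemma trace_char_primitive {p : ℕ} [Fact p.Prime] {F : Type} [Field F] [Fintype F]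
    [Algebra (ZMod p) F] {ψ : AddChar (ZMod p) ℂ} (hψ : ψ.IsPrimitive) :
    (ψ.compAddMonoidHom (Algebra.trace (ZMod p) F).toAddMonoidHom).IsPrimitive := by
  apply AddChar.IsPrimitive.of_ne_one
  intro h
  have h1 : ψ.mulShift 1 ≠ 1 := hψ one_ne_zero
  apply h1
  ext c
  obtain ⟨x, hx⟩ := Algebra.trace_surjective (ZMod p) F c
  have := DFunLike.congr_fun h x
  simp at this
  rw [hx] at this
  simpa using this

/-- Main formula: `p^3 Ω = p^m + G Ḡ ∑ η̄(-Q(y,z))`. -/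
lemma main_formula (p m : ℕ) [Fact (Nat.Prime p)] (hp : Odd p)
    (F : Type) [Field F] [Fintype F] [Algebra (ZMod p) F]
    (hq : Fintype.card F = p ^ m)
    (hmodd : Odd m) (a b : F) (ha : a ≠ 0) (hb : b ≠ 0)
    (hab : ∀ w : ZMod p, w ≠ 0 → a ≠ algebraMap (ZMod p) F w * b)
    (α β γ : ZMod p) (hα : α = Trq p F (a ^ 2)) (hβ : β = Trq p F (b ^ 2))
    (hγ : γ = Trq p F (a * b)) :
    (p : ℂ) ^ 3 * (((univ.filter (fun d : F =>
      Trq p F (d ^ 2) = 0 ∧ Trq p F (a * d) = 0 ∧ Trq p F (b * d) = 0)).card : ℕ) : ℂ)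
    = (p : ℂ) ^ m + GaussQ p F * GaussP p *
      ∑ y : ZMod p, ∑ z : ZMod p, qc (ZMod p) (-(α * y ^ 2 + 2 * γ * y * z + β * z ^ 2)) := by
  obtain ⟨ψ, hψ, hchi⟩ := exists_psi p
  have hp2 : p ≠ 2 := by rintro rfl; revert hp; decide
  have hKp : ringChar (ZMod p) ≠ 2 := by rw [ZMod.ringChar_zmod_n]; exact hp2
  have hchar : CharP F p := charP_of_injective_algebraMap (algebraMap (ZMod p) F).injective p
  have hKF : ringChar F ≠ 2 := by rw [ringChar.eq F p]; exact hp2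
  have h2p : (2 : ZMod p) ≠ 0 := Ring.two_ne_zero hKp
  set Ψ := ψ.compAddMonoidHom (Algebra.trace (ZMod p) F).toAddMonoidHom with hΨdef
  have hΨ : Ψ.IsPrimitive := trace_char_primitive hψ
  have hΨa : ∀ x, Ψ x = ψ (Trq p F x) := fun x => rfl
  have hGQ : GaussQ p F = ∑ x : F, qc F x * Ψ x := by
    rw [GaussQ, Finset.sum_filter]
    refine Finset.sum_congr rfl fun x _ => ?_
    rw [qc_etaQ, chiQ, hchi, ← hΨa]
    by_cases hx : x = 0
    · simp [hx, qc_zero]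
    · simp [hx]
  have hGP : GaussP p = ∑ x : ZMod p, qc (ZMod p) x * ψ x := by
    rw [GaussP, Finset.sum_filter]
    refine Finset.sum_congr rfl fun x _ => ?_
    rw [qc_etaBar, hchi]
    by_cases hx : x = 0
    · simp [hx, qc_zero]
    · simp [hx]
  have hTadd : ∀ x y, Trq p F (x + y) = Trq p F x + Trq p F y := fun x y => by simp [Trq]
  have hTmul : ∀ (w : ZMod p) (x : F), Trq p F (algebraMap (ZMod p) F w * x) = w * Trq p F x := by
    intro w x
    simp only [Trq, ← Algebra.smul_def, map_smul, smul_eq_mul]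
  set i := algebraMap (ZMod p) F with hi
  let T : ZMod p → ZMod p → ZMod p → ℂ := fun x y z =>
    ∑ d : F, Ψ (i x * d ^ 2 + (i y * a + i z * b) * d)
  -- expansion
  have hexp : (p : ℂ) ^ 3 * (((univ.filter (fun d : F =>
      Trq p F (d ^ 2) = 0 ∧ Trq p F (a * d) = 0 ∧ Trq p F (b * d) = 0)).card : ℕ) : ℂ)
      = ∑ x : ZMod p, ∑ y : ZMod p, ∑ z : ZMod p, T x y z := by
    have hd : ∀ c : ZMod p, ∑ x : ZMod p, ψ (x * c) = if c = 0 then (p : ℂ) else 0 := by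
      intro c
      have := AddChar.sum_mulShift c hψ
      rw [ZMod.card] at this
      rw [this]; split_ifs <;> simp
    have h1 : ∀ d : F, (if Trq p F (d ^ 2) = 0 ∧ Trq p F (a * d) = 0 ∧ Trq p F (b * d) = 0
        then (p : ℂ) ^ 3 else 0) = ∑ x : ZMod p, ∑ y : ZMod p, ∑ z : ZMod p,
          Ψ (i x * d ^ 2 + (i y * a + i z * b) * d) := by
      intro d
      have h2 : ∀ x y z : ZMod p, Ψ (i x * d ^ 2 + (i y * a + i z * b) * d)
          = ψ (x * Trq p F (d ^ 2)) * (ψ (y * Trq p F (a * d)) * ψ (z * Trq p F (b * d))) := by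
        intro x y z
        rw [hΨa, add_mul, mul_assoc, mul_assoc, hTadd, hTadd, hTmul, hTmul, hTmul,
          AddChar.map_add_eq_mul, AddChar.map_add_eq_mul]
      simp only [h2, ← Finset.mul_sum, ← Finset.sum_mul, hd]
      by_cases c1 : Trq p F (d ^ 2) = 0 <;> by_cases c2 : Trq p F (a * d) = 0 <;>
        by_cases c3 : Trq p F (b * d) = 0 <;> simp [c1, c2, c3]
      ring
    rw [Finset.card_filter]
    push_cast
    rw [Finset.mul_sum]
    simp only [mul_ite, mul_one, mul_zero, h1, T]
    rw [Finset.sum_comm]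
    refine Finset.sum_congr rfl fun x _ => ?_
    rw [Finset.sum_comm]
    refine Finset.sum_congr rfl fun y _ => ?_
    rw [Finset.sum_comm]
  -- the term x = 0
  have hlin : ∀ y z : ZMod p, i y * a + i z * b = 0 ↔ y = 0 ∧ z = 0 := by
    intro y z
    constructor
    · intro h
      by_cases hy : y = 0
      · subst hy
        simp [hb] at h
        exact ⟨rfl, by simpa [hi] using h⟩
      · exfalso
        have hiy : i y ≠ 0 := by simpa [hi] using hy
        have e : a = i (-(z / y)) * b := by
          rw [map_neg, map_div₀]
          field_simp
          linear_combination h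
        by_cases hz : z = 0
        · subst hz; apply ha; simpa using e
        · exact hab _ (neg_ne_zero.2 (div_ne_zero hz hy)) e
    · rintro ⟨rfl, rfl⟩; simp
  have hzero : ∑ y : ZMod p, ∑ z : ZMod p, T 0 y z = (p : ℂ) ^ m := by
    have h1 : ∀ y z : ZMod p, T 0 y z = if y = 0 then (if z = 0 then (p : ℂ) ^ m else 0) else 0 := by
      intro y z
      have h2 := AddChar.sum_mulShift (i y * a + i z * b) hΨ
      have h3 : T 0 y z = ∑ x : F, Ψ (x * (i y * a + i z * b)) := by
        refine Finset.sum_congr rfl fun d _ => ?_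
        congr 1
        rw [map_zero]; ring
      rw [h3, h2]
      simp only [hlin]
      by_cases hy : y = 0 <;> by_cases hz : z = 0 <;> simp [hy, hz, hq, ha, hb]
    simp [h1]
  -- the terms x ≠ 0
  have hne : ∀ x : ZMod p, x ≠ 0 → ∑ y : ZMod p, ∑ z : ZMod p, T x y z
      = ∑ y : ZMod p, ∑ z : ZMod p, GaussQ p F * (qc (ZMod p) x *
        ψ (x * (-(α * y ^ 2 + 2 * γ * y * z + β * z ^ 2)))) := by
    intro x hx
    have hix : i x ≠ 0 := by simpa [hi] using hx
    have h2x : 2 * x ≠ 0 := mul_ne_zero h2p hx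
    have hs : ∀ f : ZMod p → ℂ, ∑ y : ZMod p, f y = ∑ y : ZMod p, f (2 * x * y) := by
      intro f
      exact (Equiv.sum_comp (Equiv.mulLeft₀ (2 * x) h2x) f).symm
    rw [hs]
    refine Finset.sum_congr rfl fun y _ => ?_
    rw [hs]
    refine Finset.sum_congr rfl fun z _ => ?_
    set e := i y * a + i z * b with he
    have h1 : T x (2 * x * y) (2 * x * z) = ∑ d : F, Ψ ((d + e) ^ 2 * i x) * Ψ (i x * (-e ^ 2)) := by
      refine Finset.sum_congr rfl fun d _ => ?_
      rw [← AddChar.map_add_eq_mul]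
      congr 1
      rw [he]
      simp only [map_mul, map_ofNat]
      ring
    have h3 : Trq p F (-e ^ 2) = -(α * y ^ 2 + 2 * γ * y * z + β * z ^ 2) := by
      have h4 : -e ^ 2 = i (-y ^ 2) * a ^ 2 + i (-(2 * y * z)) * (a * b) + i (-z ^ 2) * b ^ 2 := by
        rw [he]
        simp only [map_mul, map_neg, map_pow, map_ofNat]
        ring
      rw [h4, hTadd, hTadd, hTmul, hTmul, hTmul, ← hα, ← hβ, ← hγ]
      ring
    rw [h1, ← Finset.sum_mul]
    have h5 : ∑ d : F, Ψ ((d + e) ^ 2 * i x) = ∑ d : F, Ψ (d ^ 2 * i x) :=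
      Equiv.sum_comp (Equiv.addRight e) (fun d => Ψ (d ^ 2 * i x))
    rw [h5, quad_sum_s14 hKF Ψ hΨ hix, ← hGQ, hi, qc_base hq hmodd, ← hi, hΨa, hTmul, h3]
    ring
  have hall : ∀ x : ZMod p, ∑ y : ZMod p, ∑ z : ZMod p, T x y z
      = (if x = 0 then (p : ℂ) ^ m else 0) + ∑ y : ZMod p, ∑ z : ZMod p,
        GaussQ p F * (qc (ZMod p) x *
        ψ (x * (-(α * y ^ 2 + 2 * γ * y * z + β * z ^ 2)))) := by
    intro x
    by_cases hx : x = 0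
    · subst hx
      rw [hzero]; simp [qc_zero]
    · rw [hne x hx]; simp [hx]
  rw [hexp]
  simp only [hall]
  rw [Finset.sum_add_distrib]
  congr 1
  · simp
  · rw [Finset.sum_comm, Finset.mul_sum]
    refine Finset.sum_congr rfl fun y _ => ?_
    rw [Finset.sum_comm, Finset.mul_sum]
    refine Finset.sum_congr rfl fun z _ => ?_
    rw [← Finset.mul_sum, gauss_shift hKp, ← hGP]
    ring

theorem Omega_card_m_odd (p m : ℕ) [Fact (Nat.Prime p)] (hp : Odd p)
    (F : Type) [Field F] [Fintype F] [Algebra (ZMod p) F]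
    (hm : 0 < m) (hq : Fintype.card F = p ^ m)
    (hmodd : Odd m) (a b : F) (ha : a ≠ 0) (hb : b ≠ 0)
    (hab : ∀ w : ZMod p, w ≠ 0 → a ≠ algebraMap (ZMod p) F w * b)
    (α β γ : ZMod p) (hα : α = Trq p F (a ^ 2)) (hβ : β = Trq p F (b ^ 2))
    (hγ : γ = Trq p F (a * b)) :
    (α ≠ 0 ∧ β = 0 ∧ γ = 0 →
      (((univ.filter (fun d : F =>
      Trq p F (d ^ 2) = 0 ∧ Trq p F (a * d) = 0 ∧ Trq p F (b * d) = 0)).card : ℕ) : ℂ) = (p : ℂ) ^ ((m : ℤ) - 3 : ℤ) + etaBar p (-α) * (p : ℂ) ^ (-2 : ℤ) * ((p : ℂ) - 1) * (GaussQ p F * GaussP p)) ∧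
    ((α ≠ 0 ∧ β ≠ 0 ∧ α * β ≠ γ ^ 2) ∨ (α = 0 ∧ β = 0) →
      (((univ.filter (fun d : F =>
      Trq p F (d ^ 2) = 0 ∧ Trq p F (a * d) = 0 ∧ Trq p F (b * d) = 0)).card : ℕ) : ℂ) = (p : ℂ) ^ ((m : ℤ) - 3 : ℤ)) ∧
    (γ ≠ 0 ∧ ((α ≠ 0 ∧ β = 0) ∨ (α = 0 ∧ β ≠ 0)) →
      (((univ.filter (fun d : F =>
      Trq p F (d ^ 2) = 0 ∧ Trq p F (a * d) = 0 ∧ Trq p F (b * d) = 0)).card : ℕ) : ℂ) = (p : ℂ) ^ ((m : ℤ) - 3 : ℤ)) ∧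
    ((α ≠ 0 ∧ β ≠ 0 ∧ α * β = γ ^ 2) ∨ (β ≠ 0 ∧ α = 0 ∧ γ = 0) →
      (((univ.filter (fun d : F =>
      Trq p F (d ^ 2) = 0 ∧ Trq p F (a * d) = 0 ∧ Trq p F (b * d) = 0)).card : ℕ) : ℂ) = (p : ℂ) ^ ((m : ℤ) - 3 : ℤ) + etaBar p (-β) * (p : ℂ) ^ (-2 : ℤ) * ((p : ℂ) - 1) * (GaussQ p F * GaussP p)) := by
  have hmain := main_formula p m hp F hq hmodd a b ha hb hab α β γ hα hβ hγ
  have hp2 : p ≠ 2 := by rintro rfl; revert hp; decide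
  have hKp : ringChar (ZMod p) ≠ 2 := by rw [ZMod.ringChar_zmod_n]; exact hp2
  have hp0 : (p : ℂ) ≠ 0 := by exact_mod_cast (Fact.out : p.Prime).ne_zero
  clear hα hβ hγ
  generalize (((univ.filter (fun d : F =>
      Trq p F (d ^ 2) = 0 ∧ Trq p F (a * d) = 0 ∧ Trq p F (b * d) = 0)).card : ℕ) : ℂ) = N at *
  have hpow : (p : ℂ) ^ ((m : ℤ) - 3 : ℤ) = (p : ℂ) ^ m / (p : ℂ) ^ 3 := by
    rw [zpow_sub₀ hp0]; norm_cast
  have hpow2 : (p : ℂ) ^ (-2 : ℤ) = 1 / (p : ℂ) ^ 2 := by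
    rw [zpow_neg, one_div]; norm_cast
  rw [hpow, hpow2, qc_etaBar, qc_etaBar]
  have key0 : ∑ y : ZMod p, ∑ z : ZMod p,
      qc (ZMod p) (-(α * y ^ 2 + 2 * γ * y * z + β * z ^ 2)) = 0 →
      N = (p : ℂ) ^ m / (p : ℂ) ^ 3 := by
    intro h
    rw [h, mul_zero, add_zero] at hmain
    rw [← hmain]; field_simp
  have key1 : ∀ δ : ℂ, ∑ y : ZMod p, ∑ z : ZMod p,
      qc (ZMod p) (-(α * y ^ 2 + 2 * γ * y * z + β * z ^ 2)) = (p : ℂ) * (p - 1) * δ →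
      N = (p : ℂ) ^ m / (p : ℂ) ^ 3 + δ * (1 / (p : ℂ) ^ 2) * ((p : ℂ) - 1) *
        (GaussQ p F * GaussP p) := by
    intro δ h
    rw [h] at hmain
    field_simp
    linear_combination hmain
  refine ⟨?_, ?_, ?_, ?_⟩
  · rintro ⟨h1, rfl, rfl⟩
    apply key1
    rw [sum_swap_form, form_deg h1 (by ring), ZMod.card]
  · rintro (⟨h1, h2, h3⟩ | ⟨rfl, rfl⟩)
    · exact key0 (form_nondeg hKp h1 h3)
    · exact key0 (form_hyp hKp γ)
  · rintro ⟨h1, ⟨h2, rfl⟩ | ⟨rfl, h2⟩⟩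
    · exact key0 (form_nondeg hKp h2 (by rw [mul_zero]; exact (pow_ne_zero 2 h1).symm))
    · apply key0
      rw [sum_swap_form]
      exact form_nondeg hKp h2 (by rw [mul_zero]; exact (pow_ne_zero 2 h1).symm)
  · rintro (⟨h1, h2, h3⟩ | ⟨h1, rfl, rfl⟩)
    · apply key1
      rw [form_deg h2 h3, ZMod.card]
    · apply key1
      rw [form_deg h1 (by ring), ZMod.card]
end
end
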